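/- arXiv:1311.3354 — 2 statements merged into one kernel-verified Lean document; each statement's English description precedes it below -/
import Mathlib

section
/- Let s, t ∈ ℂ satisfy t² = 1/3 and s^{12} = −576(26t − 15). In R = ℂ[u,v,x,y] define the 2×2 matrix d¹ = [[a, b], [c, d]] with a = y² − v + (1/2)·x·(s·u)² + ((2t+1)/8)·(s·u)⁶, b = −x + y·(s·u) + ((t+1)/4)·(s·u)⁴, c = x² + y·x·(s·u) + (t/4)·x·(s·u)⁴ + ((2t+1)/4)·y·(s·u)⁵ − ((9t+5)/48)·(s·u)⁸, d = y² + v + (1/2)·x·(s·u)² + ((2t+1)/8)·(s·u)⁶. Then det(d¹) = x³ + y⁴ − u^{12} − v². Consequently, with d⁰ the adjugate of d¹, the pair (d⁰, d¹) is a rank-two matrix factorisation of V^{(E₆)}(x,y) − V^{(A_{11})}(u,v) = x³ + y⁴ − u^{12} − v². Moreover, each entry of d¹ is weighted homogeneous for the weights w(u) = 1/6, w(v) = 1, w(x) = 2/3, w(y) = 1/2, the entries having degrees [[1, 2/3], [4/3, 1]] respectively. -/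
/-!
The determinant identity is a polynomial identity in `u, v, x, y`, so it can be checked after
evaluation at every point of `ℂ⁴`. Expanding `ad - bc`, all mixed monomials cancel modulo
`t² = 1/3`, and the remaining term is `((26t + 15)/192) (s u)¹²`, which equals `-u¹²` because
`(26t + 15)(26t - 15) = 676/3 - 225 = 1/3`. The two products with the adjugate are then
Cramer's rule. Homogeneity is inherited from the generators, since `WHom` follows from
Mathlib's `IsWeightedHomogeneous`.
-/

open MvPolynomial

noncomputable section

/-- The polynomial ring `R = ℂ[u,v,x,y]`. -/
abbrev R4 : Type := MvPolynomial (Fin 4) ℂ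

def u : R4 := X 0
def v : R4 := X 1
def x : R4 := X 2
def y : R4 := X 3

/-- A polynomial is weighted homogeneous of degree `q` for the weights `w`. -/
def WHom (w : Fin 4 → ℚ) (q : ℚ) (p : R4) : Prop :=
  ∀ m ∈ p.support, (∑ i : Fin 4, (m i : ℚ) * w i) = q

/-- The matrix `d¹` of the E₆ orbifold equivalence. -/
def dE6 (s t : ℂ) : Matrix (Fin 2) (Fin 2) R4 :=
  !![y ^ 2 - v + C (1/2 : ℂ) * x * (C s * u) ^ 2 + C ((2*t+1)/8) * (C s * u) ^ 6,
     -x + y * (C s * u) + C ((t+1)/4) * (C s * u) ^ 4;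
     x ^ 2 + y * x * (C s * u) + C (t/4) * x * (C s * u) ^ 4
       + C ((2*t+1)/4) * y * (C s * u) ^ 5 - C ((9*t+5)/48) * (C s * u) ^ 8,
     y ^ 2 + v + C (1/2 : ℂ) * x * (C s * u) ^ 2 + C ((2*t+1)/8) * (C s * u) ^ 6]

theorem WHom.of_isWeightedHomogeneous {w : Fin 4 → ℚ} {q : ℚ} {p : R4}
    (h : IsWeightedHomogeneous w p q) : WHom w q p := by
  intro m hm
  have h' := h (mem_support_iff.mp hm)
  rw [Finsupp.weight_apply, Finsupp.sum_fintype _ _ (by simp)] at h'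
  simpa [nsmul_eq_mul] using h'

theorem det_dE6 (s t : ℂ) (ht : t ^ 2 = 1/3) (hs : s ^ 12 = -576 * (26 * t - 15)) :
    (dE6 s t).det = x ^ 3 + y ^ 4 - u ^ 12 - v ^ 2 := by
  apply MvPolynomial.funext
  intro e
  simp only [dE6, Matrix.det_fin_two_of, u, v, x, y, map_add, map_sub, map_mul, map_pow, map_neg,
    eval_X, eval_C]
  -- The multiples of `ht` clear `t²` from the coefficients of `x (su)⁸`, `y (su)⁹`, `(su)¹²`
  -- and finally from `(26t + 15)(26t - 15)`.
  linear_combination (-(1/16) * e 2 * (s * e 0) ^ 8 - (1/8) * e 3 * (s * e 0) ^ 9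
    + (21/192) * (s * e 0) ^ 12 - 2028 * e 0 ^ 12) * ht + ((15 + 26 * t)/192) * e 0 ^ 12 * hs

/-- The entries are sums of terms built from the generators, whose weights are read off
factor by factor. -/
theorem wHom_dE6 (s t : ℂ) (i j : Fin 2) :
    WHom ![1/6, 1, 2/3, 1/2] (!![(1 : ℚ), 2/3; 4/3, 1] i j) (dE6 s t i j) := by
  apply WHom.of_isWeightedHomogeneous
  set w : Fin 4 → ℚ := ![1/6, 1, 2/3, 1/2] with hw
  have hC : ∀ r : ℂ, IsWeightedHomogeneous w (C r : R4) 0 := isWeightedHomogeneous_C w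
  have hu (n : ℕ) : IsWeightedHomogeneous w ((C s * u) ^ n) (n * (1/6)) := by
    simpa [hw, u] using ((hC s).mul (isWeightedHomogeneous_X ℂ w 0)).pow n
  have hu1 : IsWeightedHomogeneous w (C s * u) (1/6) := by simpa using hu 1
  have hv : IsWeightedHomogeneous w v 1 := isWeightedHomogeneous_X ℂ w 1
  have hx : IsWeightedHomogeneous w x (2/3) := isWeightedHomogeneous_X ℂ w 2
  have hy : IsWeightedHomogeneous w y (1/2) := isWeightedHomogeneous_X ℂ w 3
  have hcast {p : R4} {q q' : ℚ} (h : IsWeightedHomogeneous w p q) (e : q = q') :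
      IsWeightedHomogeneous w p q' := e ▸ h
  have hadd {p p' : R4} {q : ℚ} (h : IsWeightedHomogeneous w p q)
      (h' : IsWeightedHomogeneous w p' q) : IsWeightedHomogeneous w (p + p') q :=
    (weightedHomogeneousSubmodule ℂ w q).add_mem h h'
  have hneg {p : R4} {q : ℚ} (h : IsWeightedHomogeneous w p q) :
      IsWeightedHomogeneous w (-p) q := by
    simpa using (hC (-1)).mul h
  have hsub {p p' : R4} {q : ℚ} (h : IsWeightedHomogeneous w p q)
      (h' : IsWeightedHomogeneous w p' q) : IsWeightedHomogeneous w (p - p') q := by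
    simpa [sub_eq_add_neg] using hadd h (hneg h')
  have hy2 : IsWeightedHomogeneous w (y ^ 2) 1 := hcast (hy.pow 2) (by norm_num)
  have h1 : IsWeightedHomogeneous w (C (1/2 : ℂ) * x * (C s * u) ^ 2) 1 :=
    hcast (((hC _).mul hx).mul (hu 2)) (by norm_num)
  have h2 : IsWeightedHomogeneous w (C ((2*t+1)/8) * (C s * u) ^ 6) 1 :=
    hcast ((hC _).mul (hu 6)) (by norm_num)
  fin_cases i <;> fin_cases j
  · exact hadd (hadd (hsub hy2 hv) h1) h2
  · exact hadd (hadd (hneg hx) (hcast (hy.mul hu1) (by norm_num)))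
      (hcast ((hC _).mul (hu 4)) (by norm_num))
  · exact hsub (hadd (hadd (hadd (hcast (hx.pow 2) (by norm_num))
      (hcast ((hy.mul hx).mul hu1) (by norm_num)))
      (hcast (((hC _).mul hx).mul (hu 4)) (by norm_num)))
      (hcast (((hC _).mul hy).mul (hu 5)) (by norm_num)))
      (hcast ((hC _).mul (hu 8)) (by norm_num))
  · exact hadd (hadd (hadd hy2 hv) h1) h2

theorem stmt2 (s t : ℂ) (ht : t ^ 2 = 1/3) (hs : s ^ 12 = -576 * (26 * t - 15)) :
    (dE6 s t).det = x ^ 3 + y ^ 4 - u ^ 12 - v ^ 2 ∧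
    dE6 s t * (dE6 s t).adjugate
      = (x ^ 3 + y ^ 4 - u ^ 12 - v ^ 2) • (1 : Matrix (Fin 2) (Fin 2) R4) ∧
    (dE6 s t).adjugate * dE6 s t
      = (x ^ 3 + y ^ 4 - u ^ 12 - v ^ 2) • (1 : Matrix (Fin 2) (Fin 2) R4) ∧
    ∀ i j, WHom ![1/6, 1, 2/3, 1/2] (!![(1 : ℚ), 2/3; 4/3, 1] i j) (dE6 s t i j) := by
  refine ⟨det_dE6 s t ht hs, ?_, ?_, wHom_dE6 s t⟩
  · rw [Matrix.mul_adjugate, det_dE6 s t ht hs]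
  · rw [Matrix.adjugate_mul, det_dE6 s t ht hs]
end
end

section
/- Let s, t ∈ ℂ satisfy t² = 1/3 and s^{12} = −576(26t − 15) (so in particular s ≠ 0 and 1 − t ≠ 0). Let d¹ be the 2×2 matrix over R = ℂ[u,v,x,y] with entries a = y² − v + (1/2)·x·(s·u)² + ((2t+1)/8)·(s·u)⁶, b = −x + y·(s·u) + ((t+1)/4)·(s·u)⁴, c = x² + y·x·(s·u) + (t/4)·x·(s·u)⁴ + ((2t+1)/4)·y·(s·u)⁵ − ((9t+5)/48)·(s·u)⁸, d = y² + v + (1/2)·x·(s·u)² + ((2t+1)/8)·(s·u)⁶; let d⁰ = adjugate(d¹), d = [[0, d¹], [d⁰, 0]], and S = str(∂_u d · ∂_v d · ∂_x d · ∂_y d) ∈ R. Then: (i) for all natural numbers a', b', the coefficient of the monomial u^{a'} v^{b'} x¹ y² in S equals −12s if a' = b' = 0 and 0 otherwise; (ii) for all natural numbers c', e', the coefficient of the monomial u^{10} v⁰ x^{c'} y^{e'} in S equals −72(1−t)/s if c' = e' = 0 and 0 otherwise. Equivalently, the left quantum dimension of this matrix factorisation of x³ + y⁴ − u^{12} − v²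 equals s and its right quantum dimension equals 3(1−t)/s; both are non-zero. -/
/-!
The block structure of the twisted differential reduces the supertrace to
`tr(∂_u d¹ ∂_v d⁰ ∂_x d¹ ∂_y d⁰) - tr(∂_u d⁰ ∂_v d¹ ∂_x d⁰ ∂_y d¹)`. Expanding it for a matrix `d¹` of
the given shape with indeterminate scalar coefficients (`str_dGen`) leaves only eight monomials. Among
them `x y²` is the only one with `(x,y)`-exponents `(1,2)`, and `u¹⁰` is the only one with
`(u,v)`-exponents `(10,0)`. Their coefficients are `-12 s` and, once `t² = 1/3` is used,
`(33 t + 19)/8 · s¹¹`; the latter equals `-72 (1 - t)/s` because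
`(26 t - 15)(33 t + 19) = 1 - t` when `t² = 1/3`.
-/

open MvPolynomial

noncomputable section

/-- The exponent vector of the monomial `u^a v^b x^c y^e`. -/
def mon (a b c e : ℕ) : Fin 4 →₀ ℕ :=
  Finsupp.single 0 a + Finsupp.single 1 b + Finsupp.single 2 c + Finsupp.single 3 e

/-- Entrywise partial derivative of a matrix of polynomials. -/
def pd {m n : Type} (i : Fin 4) (M : Matrix m n R4) : Matrix m n R4 :=
  M.map fun p => pderiv i p

/-- The supertrace of a `2r × 2r` block matrix. -/
def str {r : ℕ} (M : Matrix (Fin r ⊕ Fin r) (Fin r ⊕ Fin r) R4) : R4 :=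
  Matrix.trace M.toBlocks₁₁ - Matrix.trace M.toBlocks₂₂

/-- The twisted differential `d = [[0, d¹], [d⁰, 0]]` with `d⁰` the adjugate of `d¹`. -/
def DE6 (s t : ℂ) : Matrix (Fin 2 ⊕ Fin 2) (Fin 2 ⊕ Fin 2) R4 :=
  Matrix.fromBlocks 0 (dE6 s t) (dE6 s t).adjugate 0

/-- The supertrace `S = str(∂_u d · ∂_v d · ∂_x d · ∂_y d)`. -/
def SE6 (s t : ℂ) : R4 :=
  str (pd 0 (DE6 s t) * pd 1 (DE6 s t) * pd 2 (DE6 s t) * pd 3 (DE6 s t))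

/-- The shape of `dE6`, with arbitrary scalars `h, p, q, r, m, n` in place of the particular
coefficients. -/
def dGen (s h p q r m n : ℂ) : Matrix (Fin 2) (Fin 2) R4 :=
  !![y ^ 2 - v + C h * x * (C s * u) ^ 2 + C p * (C s * u) ^ 6,
     -x + y * (C s * u) + C q * (C s * u) ^ 4;
     x ^ 2 + y * x * (C s * u) + C r * x * (C s * u) ^ 4
       + C m * y * (C s * u) ^ 5 - C n * (C s * u) ^ 8,
     y ^ 2 + v + C h * x * (C s * u) ^ 2 + C p * (C s * u) ^ 6]

lemma monomial_mon (a b c e : ℕ) (k : ℂ) :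
    (monomial (mon a b c e) k : R4) = C k * (u ^ a * v ^ b * x ^ c * y ^ e) := by
  simp only [mon, u, v, x, y, X_pow_eq_monomial, monomial_mul, C_mul_monomial, mul_one]

lemma mon_inj {a b c e a' b' c' e' : ℕ} :
    mon a b c e = mon a' b' c' e' ↔ a = a' ∧ b = b' ∧ c = c' ∧ e = e' := by
  constructor
  · intro H
    have h0 := DFunLike.congr_fun H 0
    have h1 := DFunLike.congr_fun H 1
    have h2 := DFunLike.congr_fun H 2
    have h3 := DFunLike.congr_fun H 3
    simp [mon] at h0 h1 h2 h3
    exact ⟨h0, h1, h2, h3⟩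
  · rintro ⟨rfl, rfl, rfl, rfl⟩
    rfl

lemma pd_fromBlocks (i : Fin 4) (A B : Matrix (Fin 2) (Fin 2) R4) :
    pd i (Matrix.fromBlocks 0 A B 0) = Matrix.fromBlocks 0 (pd i A) (pd i B) 0 := by
  have h0 : (0 : Matrix (Fin 2) (Fin 2) R4).map (fun p => pderiv i p) = 0 := by
    ext; simp
  simp [pd, Matrix.fromBlocks_map, h0]

/-- The supertrace of the derivatives for a twisted differential with off-diagonal blocks `A`, `B`. -/
lemma str_fromBlocks (A B : Matrix (Fin 2) (Fin 2) R4) :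
    str (pd 0 (Matrix.fromBlocks 0 A B 0) * pd 1 (Matrix.fromBlocks 0 A B 0)
      * pd 2 (Matrix.fromBlocks 0 A B 0) * pd 3 (Matrix.fromBlocks 0 A B 0))
    = (pd 0 A * pd 1 B * pd 2 A * pd 3 B).trace - (pd 0 B * pd 1 A * pd 2 B * pd 3 A).trace := by
  simp [pd_fromBlocks, str, Matrix.fromBlocks_multiply]

lemma pd_of (i : Fin 4) (a b c d : R4) :
    pd i !![a, b; c, d] = !![pderiv i a, pderiv i b; pderiv i c, pderiv i d] := by
  ext k l
  fin_cases k <;> fin_cases l <;> rfl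

/-- Expansion of the supertrace into monomials, for a matrix of the general shape. -/
lemma str_dGen (s h p q r m n : ℂ) :
    (pd 0 (dGen s h p q r m n) * pd 1 (dGen s h p q r m n).adjugate
        * pd 2 (dGen s h p q r m n) * pd 3 (dGen s h p q r m n).adjugate).trace
      - (pd 0 (dGen s h p q r m n).adjugate * pd 1 (dGen s h p q r m n)
        * pd 2 (dGen s h p q r m n).adjugate * pd 3 (dGen s h p q r m n)).trace
    = monomial (mon 0 0 1 2) (-12 * s)
      + monomial (mon 1 0 0 3) (-4 * s ^ 2)
      + monomial (mon 2 0 2 0) (12 * h * s ^ 3)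
      + monomial (mon 3 0 1 1) ((4 * h - 32 * q - 16 * r) * s ^ 4)
      + monomial (mon 4 0 0 2) ((-4 * r - 16 * q - 20 * m) * s ^ 5)
      + monomial (mon 6 0 1 0) ((4 * h * m + 36 * p + 8 * h * q - 4 * h * r) * s ^ 7)
      + monomial (mon 7 0 0 1) ((12 * p + 32 * n - 16 * q * r - 8 * h * m) * s ^ 8)
      + monomial (mon 10 0 0 0)
          ((12 * p * m + 8 * h * q * m + 16 * h * n + 12 * p * r) * s ^ 11) := by
  have hC : ∀ k : ℕ, ∀ [k.AtLeastTwo],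
      (C (OfNat.ofNat k : ℂ) : R4) = (OfNat.ofNat k : R4) := fun k _ => map_ofNat C k
  simp only [monomial_mon, dGen, Matrix.adjugate_fin_two_of, pd_of, Matrix.mul_fin_two,
    Matrix.trace_fin_two_of, map_add, map_sub, map_neg, map_mul, map_pow, hC]
  simp only [Derivation.leibniz, Derivation.leibniz_pow, pderiv_C, u, v, x, y, pderiv_X,
    smul_eq_mul, nsmul_eq_mul]
  simp
  ring

theorem stmt3 (s t : ℂ) (ht : t ^ 2 = 1/3) (hs : s ^ 12 = -576 * (26 * t - 15)) :
    s ≠ 0 ∧ 1 - t ≠ 0 ∧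
    (∀ a' b' : ℕ, coeff (mon a' b' 1 2) (SE6 s t)
        = if a' = 0 ∧ b' = 0 then -12 * s else 0) ∧
    (∀ c' e' : ℕ, coeff (mon 10 0 c' e') (SE6 s t)
        = if c' = 0 ∧ e' = 0 then -72 * (1 - t) / s else 0) ∧
    -(1/12 : ℂ) * coeff (mon 0 0 1 2) (SE6 s t) = s ∧
    -(1/24 : ℂ) * coeff (mon 10 0 0 0) (SE6 s t) = 3 * (1 - t) / s ∧
    3 * (1 - t) / s ≠ 0 := by
  have hS := (str_fromBlocks _ _).trans
    (str_dGen s (1/2) ((2*t+1)/8) ((t+1)/4) (t/4) ((2*t+1)/4) ((9*t+5)/48))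
  change SE6 s t = _ at hS
  have ht1 : 1 - t ≠ 0 := by
    intro h
    have : t = 1 := by linear_combination -h
    rw [this] at ht
    norm_num at ht
  have hs0 : s ≠ 0 := by
    rintro rfl
    -- `26 t = 15` contradicts `t² = 1/3`, since `26² = 3 · 15² + 1`.
    have h1 : t = 15 / 26 := by linear_combination (1 / 14976 : ℂ) * hs
    rw [h1] at ht
    norm_num at ht
  have key1 : ∀ a' b' : ℕ, coeff (mon a' b' 1 2) (SE6 s t)
      = if a' = 0 ∧ b' = 0 then -12 * s else 0 := by
    intro a' b'
    rw [hS]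
    simp only [coeff_add, coeff_monomial, mon_inj]
    simp [eq_comm (a := 0)]
  have key2 : ∀ c' e' : ℕ, coeff (mon 10 0 c' e') (SE6 s t)
      = if c' = 0 ∧ e' = 0 then -72 * (1 - t) / s else 0 := by
    intro c' e'
    have hval : (12 * ((2*t+1)/8) * ((2*t+1)/4) + 8 * (1/2) * ((t+1)/4) * ((2*t+1)/4)
        + 16 * (1/2) * ((9*t+5)/48) + 12 * ((2*t+1)/8) * (t/4)) * s ^ 11
        = -72 * (1 - t) / s := by
      rw [eq_div_iff hs0]
      linear_combination (11 / 4 * t ^ 2 + 33 / 8 * t + 35 / 24) * hs + (-41184 * t + -38016) * ht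
    rw [hS, ← hval]
    simp only [coeff_add, coeff_monomial, mon_inj]
    simp [eq_comm (a := 0)]
  refine ⟨hs0, ht1, key1, key2, ?_, ?_, ?_⟩
  · rw [key1, if_pos ⟨rfl, rfl⟩]
    ring
  · rw [key2, if_pos ⟨rfl, rfl⟩]
    ring
  · exact div_ne_zero (mul_ne_zero three_ne_zero ht1) hs0
end
end
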